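/- arXiv:0710.4976 — 2 statements merged into one kernel-verified Lean document; each statement's English description precedes it below -/
import Mathlib

section
/- For all integers 0 ≤ m ≤ n, the ordinary binomial coefficient is recovered from Gaussian binomial coefficients and q-Stirling numbers of the first kind by C(n,m) = Σ_{k=m}^n (q−1)^{k−m} binom(n,k)_q s_1(k,m,q), as an identity in K (with C(n,m) meaning the image of the integer binomial coefficient in K). (Equation (21).) -/
/-- The q-analogue `[n]_q = (1 - q^n)/(1 - q)` of a natural number. -/
def qnum {K : Type*} [Field K] (q : K) (n : ℕ) : K := (1 - q ^ n) / (1 - q)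

/-- The q-factorial `[n]_q! = ∏_{j=1}^n [j]_q`. -/
def qfact {K : Type*} [Field K] (q : K) (n : ℕ) : K :=
  ∏ j ∈ Finset.range n, qnum q (j + 1)

/-- The Gaussian binomial coefficient, `0` for `k > n`. -/
def qbinom {K : Type*} [Field K] (q : K) (n k : ℕ) : K :=
  if k ≤ n then qfact q n / (qfact q k * qfact q (n - k)) else 0

/-- The q-Stirling number of the first kind: the coefficient of `T^k` in
`∏_{j=0}^{n-1} (T - [j]_q)`. -/
noncomputable def qStirling1 {K : Type*} [Field K] (q : K) (n k : ℕ) : K :=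
  (∏ j ∈ Finset.range n, (Polynomial.X - Polynomial.C (qnum q j))).coeff k

lemma qnum_ne_aux {K : Type*} [Field K] (q : K)
    (hq : ∀ n : ℕ, 1 ≤ n → q ^ n ≠ 1) (n : ℕ) : qnum q (n + 1) ≠ 0 := by
  have h1 := hq 1 le_rfl
  have h2 := hq (n + 1) (by omega)
  rw [pow_one] at h1
  exact div_ne_zero (sub_ne_zero.2 h2.symm) (sub_ne_zero.2 h1.symm)

lemma qfact_ne_aux {K : Type*} [Field K] (q : K)
    (hq : ∀ n : ℕ, 1 ≤ n → q ^ n ≠ 1) (n : ℕ) : qfact q n ≠ 0 :=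
  Finset.prod_ne_zero_iff.2 fun j _ => qnum_ne_aux q hq j

lemma qfact_succ_aux {K : Type*} [Field K] (q : K) (n : ℕ) :
    qfact q (n + 1) = qfact q n * qnum q (n + 1) := Finset.prod_range_succ _ _

lemma qbinom_zero_aux {K : Type*} [Field K] (q : K)
    (hq : ∀ n : ℕ, 1 ≤ n → q ^ n ≠ 1) (n : ℕ) : qbinom q n 0 = 1 := by
  have := qfact_ne_aux q hq n
  have h0 : qfact q 0 = 1 := Finset.prod_range_zero _
  simp [qbinom, h0, this]

lemma qbinom_self_aux {K : Type*} [Field K] (q : K)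
    (hq : ∀ n : ℕ, 1 ≤ n → q ^ n ≠ 1) (n : ℕ) : qbinom q n n = 1 := by
  have := qfact_ne_aux q hq n
  have h0 : qfact q 0 = 1 := Finset.prod_range_zero _
  simp [qbinom, h0, this]

lemma qbinom_gt_aux {K : Type*} [Field K] (q : K) (n : ℕ) : qbinom q n (n + 1) = 0 := by
  simp [qbinom]

lemma qbinom_pascal_aux {K : Type*} [Field K] (q : K)
    (hq : ∀ n : ℕ, 1 ≤ n → q ^ n ≠ 1) (n k : ℕ) (hk : k ≤ n) :
    qbinom q (n + 1) (k + 1) = qbinom q n k + q ^ (k + 1) * qbinom q n (k + 1) := by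
  rcases Nat.eq_or_lt_of_le hk with rfl | h
  · rw [qbinom_self_aux q hq, qbinom_self_aux q hq, qbinom_gt_aux]; ring
  · obtain ⟨d, rfl⟩ := Nat.exists_eq_add_of_lt h
    have e1 : k + d + 1 + 1 - (k + 1) = d + 1 := by omega
    have e2 : k + d + 1 - k = d + 1 := by omega
    have e3 : k + d + 1 - (k + 1) = d := by omega
    rw [qbinom, qbinom, qbinom, if_pos (by omega), if_pos (by omega), if_pos (by omega),
      e1, e2, e3, qfact_succ_aux q (k + d + 1), qfact_succ_aux q k, qfact_succ_aux q d]
    have a1 := qfact_ne_aux q hq k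
    have a2 := qfact_ne_aux q hq d
    have a3 := qnum_ne_aux q hq k
    have a4 := qnum_ne_aux q hq d
    have key : qnum q (k + d + 1 + 1) = qnum q (k + 1) + q ^ (k + 1) * qnum q (d + 1) := by
      unfold qnum
      ring
    rw [key]
    field_simp

open Polynomial in
lemma cauchy_aux {K : Type*} [Field K] (q : K)
    (hq : ∀ n : ℕ, 1 ≤ n → q ^ n ≠ 1) (n : ℕ) :
    (1 + C (q - 1) * X : K[X]) ^ n = ∑ k ∈ Finset.range (n + 1),
      C (qbinom q n k * (q - 1) ^ k) * ∏ j ∈ Finset.range k, (X - C (qnum q j)) := by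
  have step : ∀ k : ℕ, (1 + C (q - 1) * X : K[X]) * ∏ j ∈ Finset.range k, (X - C (qnum q j))
      = C (q - 1) * ∏ j ∈ Finset.range (k + 1), (X - C (qnum q j))
        + C (q ^ k) * ∏ j ∈ Finset.range k, (X - C (qnum q j)) := by
    intro k
    have h1 := hq 1 le_rfl
    rw [pow_one] at h1
    have h1' : (1 - q) ≠ 0 := sub_ne_zero.2 h1.symm
    have e : q ^ k = 1 + (q - 1) * qnum q k := by
      unfold qnum; field_simp; ring
    rw [Finset.prod_range_succ, e, C_add, C_mul, C_1]
    ring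
  induction n with
  | zero => simp [qbinom_zero_aux q hq]
  | succ n ih =>
    have hA : ∑ k ∈ Finset.range (n + 1),
        C (q ^ k * (qbinom q n k * (q - 1) ^ k)) * ∏ j ∈ Finset.range k, (X - C (qnum q j))
        = ∑ k ∈ Finset.range (n + 1), C (q ^ (k + 1) * (qbinom q n (k + 1) * (q - 1) ^ (k + 1)))
          * ∏ j ∈ Finset.range (k + 1), (X - C (qnum q j)) + 1 := by
      have := Finset.sum_range_succ (fun k => C (q ^ k * (qbinom q n k * (q - 1) ^ k))
        * ∏ j ∈ Finset.range k, (X - C (qnum q j))) (n + 1)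
      rw [Finset.sum_range_succ'] at this
      simp only [qbinom_gt_aux, qbinom_zero_aux q hq, zero_mul, mul_zero, C_0, add_zero,
        pow_zero, mul_one, C_1, Finset.prod_range_zero] at this
      exact this.symm
    rw [Finset.sum_range_succ', pow_succ', ih, Finset.mul_sum]
    have hB : ∀ k ∈ Finset.range (n + 1), (1 + C (q - 1) * X : K[X]) *
        (C (qbinom q n k * (q - 1) ^ k) * ∏ j ∈ Finset.range k, (X - C (qnum q j)))
        = C (qbinom q n k * (q - 1) ^ (k + 1)) * ∏ j ∈ Finset.range (k + 1), (X - C (qnum q j))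
          + C (q ^ k * (qbinom q n k * (q - 1) ^ k))
            * ∏ j ∈ Finset.range k, (X - C (qnum q j)) := by
      intro k _
      rw [mul_left_comm, step k, pow_succ]
      simp only [C_mul]
      ring
    rw [Finset.sum_congr rfl hB, Finset.sum_add_distrib, hA, ← add_assoc,
      ← Finset.sum_add_distrib]
    congr 1
    · refine Finset.sum_congr rfl fun k hk => ?_
      rw [qbinom_pascal_aux q hq n k (by simpa [Nat.lt_succ_iff] using hk), ← add_mul, ← C_add]
      congr 2
      ring
    · simp [qbinom_zero_aux q hq]

/-- **Equation (21)**: for `0 ≤ m ≤ n`, the ordinary binomial coefficient is recovered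
from Gaussian binomial coefficients and q-Stirling numbers of the first kind:
`C(n,m) = Σ_{k=m}^n (q-1)^{k-m} binom(n,k)_q s_1(k,m,q)`. -/
theorem choose_eq_sum_qbinom_qStirling1
    {K : Type*} [Field K] [CharZero K] (q : K) (hq0 : q ≠ 0)
    (hq : ∀ n : ℕ, 1 ≤ n → q ^ n ≠ 1) (n m : ℕ) (hm : m ≤ n) :
    (Nat.choose n m : K) = ∑ k ∈ Finset.Icc m n,
      (q - 1) ^ (k - m) * qbinom q n k * qStirling1 q k m := by
  have h1 := hq 1 le_rfl
  rw [pow_one] at h1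
  have h1' : (q - 1) ≠ 0 := sub_ne_zero.2 h1
  have h := congrArg (fun p => Polynomial.coeff p m) (cauchy_aux q hq n)
  simp only [Polynomial.finset_sum_coeff, Polynomial.coeff_C_mul] at h
  have hL : ((1 + Polynomial.C (q - 1) * Polynomial.X : Polynomial K) ^ n).coeff m
      = (q - 1) ^ m * (Nat.choose n m : K) := by
    have : (1 + Polynomial.C (q - 1) * Polynomial.X : Polynomial K) ^ n
        = ((1 + Polynomial.X) ^ n : Polynomial K).comp
          (Polynomial.C (q - 1) * Polynomial.X) := by
      simp
    rw [this, Polynomial.comp_C_mul_X_coeff, Polynomial.coeff_one_add_X_pow, mul_comm]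
  rw [hL] at h
  apply mul_left_cancel₀ (pow_ne_zero m h1')
  rw [h, Finset.mul_sum]
  symm
  apply Finset.sum_subset_zero_on_sdiff
  · intro k hk
    simp only [Finset.mem_Icc, Finset.mem_range] at *
    omega
  · intro k hk
    simp only [Finset.mem_sdiff, Finset.mem_Icc, Finset.mem_range] at hk
    have hkm : k < m := by omega
    rw [Polynomial.coeff_eq_zero_of_natDegree_lt, mul_zero]
    rw [Polynomial.natDegree_finset_prod_X_sub_C_eq_card]
    simpa using hkm
  · intro k hk
    have hk' := (Finset.mem_Icc.1 hk).1
    rw [qStirling1, ← mul_assoc, ← mul_assoc, ← pow_add, Nat.add_sub_cancel' hk',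
      mul_comm ((q - 1) ^ k)]
end

section
/- For all n, k ∈ ℕ, the q-Stirling number of the second kind has the closed form S_q(n+k, n) = (1/(1−q)^k) · Σ_{j=0}^k (−1)^j C(n+k, k−j) binom(n+j, j)_q. (This is the Carlitz-type relation of Equation (18), which the paper re-derives from the negative-order q-Bernoulli numbers via Theorem 5; the indices are normalized so that both sides agree, e.g. for (n,k) = (2,1) both sides equal 2+q.) -/
/-- The q-Stirling number of the second kind
`S_q(n,k) = (q^{-C(k,2)}/[k]_q!) Σ_{j=0}^k (-1)^j q^{C(j,2)} binom(k,j)_q [k-j]_q^n`. -/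
def qStirling2 {K : Type*} [Field K] (q : K) (n k : ℕ) : K :=
  (q ^ Nat.choose k 2)⁻¹ / qfact q k *
    ∑ j ∈ Finset.range (k + 1),
      (-1 : K) ^ j * q ^ Nat.choose j 2 * qbinom q k j * (qnum q (k - j)) ^ n

section helpers
variable {K : Type*} [Field K] {q : K}

theorem aux_one_sub (hq : ∀ n : ℕ, 1 ≤ n → q ^ n ≠ 1) : (1 - q) ≠ 0 := by
  intro h
  exact hq 1 le_rfl (by rw [pow_one]; exact (sub_eq_zero.mp h).symm)

theorem aux_qnum_ne (hq : ∀ n : ℕ, 1 ≤ n → q ^ n ≠ 1) (j : ℕ) : qnum q (j + 1) ≠ 0 := by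
  unfold qnum
  refine div_ne_zero ?_ (aux_one_sub hq)
  intro h
  exact hq (j + 1) (by omega) (sub_eq_zero.mp h).symm

theorem aux_qfact_ne (hq : ∀ n : ℕ, 1 ≤ n → q ^ n ≠ 1) (j : ℕ) : qfact q j ≠ 0 := by
  unfold qfact
  exact Finset.prod_ne_zero_iff.mpr fun i _ => aux_qnum_ne hq i

theorem aux_qfact_succ (j : ℕ) : qfact q (j + 1) = qfact q j * qnum q (j + 1) := by
  unfold qfact
  rw [Finset.prod_range_succ]

theorem aux_qfact_zero : qfact q 0 = 1 := by simp [qfact]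

theorem aux_qbinom_add (a b : ℕ) :
    qbinom q (a + b) b = qfact q (a + b) / (qfact q b * qfact q a) := by
  simp [qbinom]

theorem aux_qbinom_gt {a b : ℕ} (h : a < b) : qbinom q a b = 0 := by
  simp [qbinom, h]

theorem aux_qbinom_zero (hq : ∀ n : ℕ, 1 ≤ n → q ^ n ≠ 1) (a : ℕ) : qbinom q a 0 = 1 := by
  simp [qbinom, aux_qfact_zero, aux_qfact_ne hq a]

theorem aux_qbinom_self (hq : ∀ n : ℕ, 1 ≤ n → q ^ n ≠ 1) (a : ℕ) : qbinom q a a = 1 := by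
  simp [qbinom, aux_qfact_zero, aux_qfact_ne hq a]

theorem aux_qnum_add (hq : ∀ n : ℕ, 1 ≤ n → q ^ n ≠ 1) (a b : ℕ) :
    qnum q (a + b) = qnum q a + q ^ a * qnum q b := by
  have := aux_one_sub hq
  unfold qnum
  field_simp
  ring

theorem aux_absorb (hq : ∀ n : ℕ, 1 ≤ n → q ^ n ≠ 1) (k j : ℕ) :
    qnum q (j + 1) * qbinom q (k + 1) (j + 1) = qnum q (k + 1) * qbinom q k j := by
  rcases lt_or_ge k j with h | h
  · rw [aux_qbinom_gt h, aux_qbinom_gt (by omega : k + 1 < j + 1)]; simp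
  · obtain ⟨a, rfl⟩ := Nat.exists_eq_add_of_le' h
    rw [aux_qbinom_add, add_assoc, aux_qbinom_add, ← add_assoc, aux_qfact_succ, aux_qfact_succ]
    have h1 := aux_qfact_ne hq j
    have h2 := aux_qfact_ne hq a
    have h3 := aux_qnum_ne hq j
    field_simp

theorem aux_pascal2 (hq : ∀ n : ℕ, 1 ≤ n → q ^ n ≠ 1) (m i : ℕ) :
    qbinom q (m + 1 + (i + 1)) (i + 1)
      = qbinom q (m + (i + 1)) (i + 1) + q ^ (m + 1) * qbinom q (m + 1 + i) i := by
  rw [aux_qbinom_add, aux_qbinom_add, aux_qbinom_add,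
    show m + 1 + (i + 1) = (m + 1 + i) + 1 by ring, show m + (i + 1) = m + 1 + i by ring,
    aux_qfact_succ (m + 1 + i), aux_qfact_succ i, aux_qfact_succ m,
    show m + 1 + i + 1 = (m + 1) + (i + 1) by ring, aux_qnum_add hq (m + 1) (i + 1)]
  have h1 := aux_qfact_ne hq i
  have h2 := aux_qfact_ne hq m
  have h3 := aux_qnum_ne hq i
  have h4 := aux_qnum_ne hq m
  field_simp

theorem aux_pascal1 (hq : ∀ n : ℕ, 1 ≤ n → q ^ n ≠ 1) (k j : ℕ) :
    qbinom q (k + 1) (j + 1) = q ^ (j + 1) * qbinom q k (j + 1) + qbinom q k j := by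
  rcases lt_trichotomy k j with h | h | h
  · rw [aux_qbinom_gt h, aux_qbinom_gt (by omega : k + 1 < j + 1),
      aux_qbinom_gt (by omega : k < j + 1)]; simp
  · subst h
    rw [aux_qbinom_self hq, aux_qbinom_self hq, aux_qbinom_gt (by omega : k < k + 1)]; simp
  · obtain ⟨m, rfl⟩ := Nat.exists_eq_add_of_le' (show j + 1 ≤ k from h)
    have e : qbinom q (m + (j + 1)) j = qbinom q (m + 1 + j) j := by congr 1; ring
    rw [e, show m + (j + 1) + 1 = m + 1 + (j + 1) by ring]
    rw [aux_qbinom_add, aux_qbinom_add, aux_qbinom_add,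
      show m + 1 + (j + 1) = (m + 1 + j) + 1 by ring, show m + (j + 1) = m + 1 + j by ring,
      aux_qfact_succ (m + 1 + j), aux_qfact_succ j, aux_qfact_succ m,
      show m + 1 + j + 1 = (j + 1) + (m + 1) by ring, aux_qnum_add hq (j + 1) (m + 1)]
    have h1 := aux_qfact_ne hq j
    have h2 := aux_qfact_ne hq m
    have h3 := aux_qnum_ne hq j
    have h4 := aux_qnum_ne hq m
    field_simp
    ring

theorem aux_choose (j : ℕ) : Nat.choose (j + 1) 2 = j + Nat.choose j 2 := by
  rw [Nat.choose_succ_succ' j 1, Nat.choose_one_right]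

theorem aux_partial (hq : ∀ n : ℕ, 1 ≤ n → q ^ n ≠ 1) (k r : ℕ) :
    ∑ j ∈ Finset.range (r + 1), (-1 : K) ^ j * q ^ Nat.choose j 2 * qbinom q (k + 1) j
      = (-1) ^ r * q ^ Nat.choose (r + 1) 2 * qbinom q k r := by
  induction r with
  | zero => simp [aux_qbinom_zero hq]
  | succ r ih =>
    rw [Finset.sum_range_succ, ih, aux_pascal1 hq, aux_choose (r + 1)]
    ring

theorem aux_S_zero (hq : ∀ n : ℕ, 1 ≤ n → q ^ n ≠ 1) (k : ℕ) : qStirling2 q 0 (k + 1) = 0 := by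
  unfold qStirling2
  simp only [pow_zero, mul_one]
  rw [aux_partial hq, aux_qbinom_gt (Nat.lt_succ_self k)]
  simp

theorem aux_S_rec (hq0 : q ≠ 0) (hq : ∀ n : ℕ, 1 ≤ n → q ^ n ≠ 1) (m k : ℕ) :
    qStirling2 q (m + 1) (k + 1)
      = qStirling2 q m k + qnum q (k + 1) * qStirling2 q m (k + 1) := by
  have key : ∑ j ∈ Finset.range (k + 1 + 1),
      (-1 : K) ^ j * q ^ Nat.choose j 2 * qbinom q (k + 1) j * (qnum q (k + 1 - j)) ^ (m + 1)
      = qnum q (k + 1) * (∑ j ∈ Finset.range (k + 1 + 1),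
      (-1 : K) ^ j * q ^ Nat.choose j 2 * qbinom q (k + 1) j * (qnum q (k + 1 - j)) ^ m)
      + qnum q (k + 1) * q ^ k * (∑ j ∈ Finset.range (k + 1),
      (-1 : K) ^ j * q ^ Nat.choose j 2 * qbinom q k j * (qnum q (k - j)) ^ m) := by
    rw [Finset.sum_range_succ', Finset.sum_range_succ' _ (k + 1), mul_add, Finset.mul_sum,
      Finset.mul_sum, add_right_comm, ← Finset.sum_add_distrib]
    congr 1
    · refine Finset.sum_congr rfl fun j hj => ?_
      have hj' : j ≤ k := by simpa [Nat.lt_succ_iff] using hj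
      obtain ⟨a, rfl⟩ := Nat.exists_eq_add_of_le' hj'
      have e1 : a + j + 1 - (j + 1) = a := by omega
      have e2 : a + j - j = a := by omega
      have h1 := aux_absorb hq (a + j) j
      have h2 := aux_qnum_add hq a (j + 1)
      rw [← add_assoc] at h2
      rw [e1, e2, aux_choose]
      have h3 : qnum q a = qnum q (a + j + 1) - q ^ a * qnum q (j + 1) := by rw [h2]; ring
      rw [pow_succ (qnum q a) m]
      nth_rewrite 2 [h3]
      rw [pow_add q j, pow_add q a]
      linear_combination
        ((-1 : K) ^ j * q ^ j * q ^ Nat.choose j 2 * q ^ a * qnum q a ^ m) * h1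
    · simp only [Nat.sub_zero]
      ring
  unfold qStirling2
  rw [key, aux_qfact_succ, aux_choose, pow_add]
  have h1 := aux_qfact_ne hq k
  have h2 := aux_qnum_ne hq k
  field_simp
  ring

theorem aux_S_lt (hq0 : q ≠ 0) (hq : ∀ n : ℕ, 1 ≤ n → q ^ n ≠ 1) (m : ℕ) :
    ∀ k, m < k → qStirling2 q m k = 0 := by
  induction m with
  | zero =>
    intro k hk
    obtain ⟨k, rfl⟩ := Nat.exists_eq_add_of_le' hk
    exact aux_S_zero hq k
  | succ m ih =>
    intro k hk
    obtain ⟨k, rfl⟩ := Nat.exists_eq_add_of_le' (show 1 ≤ k by omega)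
    rw [aux_S_rec hq0 hq, ih k (by omega), ih (k + 1) (by omega)]
    simp

theorem aux_S_col (m : ℕ) : qStirling2 q m 0 = 0 ^ m := by
  simp [qStirling2, qbinom, qnum, aux_qfact_zero]

theorem aux_S_diag (hq0 : q ≠ 0) (hq : ∀ n : ℕ, 1 ≤ n → q ^ n ≠ 1) (m : ℕ) :
    qStirling2 q m m = 1 := by
  induction m with
  | zero => simp [aux_S_col]
  | succ m ih => rw [aux_S_rec hq0 hq, ih, aux_S_lt hq0 hq m (m + 1) (by omega)]; simp

theorem aux_R_rec (hq : ∀ n : ℕ, 1 ≤ n → q ^ n ≠ 1) (n k : ℕ) :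
    ∑ j ∈ Finset.range (k + 1 + 1),
      (-1 : K) ^ j * (Nat.choose (n + 1 + (k + 1)) (k + 1 - j) : K) * qbinom q (n + 1 + j) j
    = ∑ j ∈ Finset.range (k + 1 + 1),
      (-1 : K) ^ j * (Nat.choose (n + (k + 1)) (k + 1 - j) : K) * qbinom q (n + j) j
    + (1 - q ^ (n + 1)) * ∑ j ∈ Finset.range (k + 1),
      (-1 : K) ^ j * (Nat.choose (n + 1 + k) (k - j) : K) * qbinom q (n + 1 + j) j := by
  have hA : ∑ j ∈ Finset.range (k + 1 + 1),
      (-1 : K) ^ j * (Nat.choose (n + 1 + (k + 1)) (k + 1 - j) : K) * qbinom q (n + 1 + j) j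
      = ∑ j ∈ Finset.range (k + 1 + 1),
      (-1 : K) ^ j * (Nat.choose (n + (k + 1)) (k + 1 - j) : K) * qbinom q (n + 1 + j) j
      + ∑ j ∈ Finset.range (k + 1),
      (-1 : K) ^ j * (Nat.choose (n + 1 + k) (k - j) : K) * qbinom q (n + 1 + j) j := by
    rw [Finset.sum_range_succ, Finset.sum_range_succ _ (k + 1),
      add_right_comm (Finset.sum _ _) _ (Finset.sum _ _),
      ← Finset.sum_add_distrib]
    congr 1
    · refine Finset.sum_congr rfl fun j hj => ?_
      have hj' : j ≤ k := by simpa [Nat.lt_succ_iff] using hj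
      rw [show k + 1 - j = (k - j) + 1 by omega, show n + 1 + (k + 1) = (n + 1 + k) + 1 by ring,
        show n + (k + 1) = n + 1 + k by ring, Nat.choose_succ_succ']
      push_cast
      ring
    · simp
  have hB : ∑ j ∈ Finset.range (k + 1 + 1),
      (-1 : K) ^ j * (Nat.choose (n + (k + 1)) (k + 1 - j) : K) * qbinom q (n + 1 + j) j
      = ∑ j ∈ Finset.range (k + 1 + 1),
      (-1 : K) ^ j * (Nat.choose (n + (k + 1)) (k + 1 - j) : K) * qbinom q (n + j) j
      - q ^ (n + 1) * ∑ j ∈ Finset.range (k + 1),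
      (-1 : K) ^ j * (Nat.choose (n + 1 + k) (k - j) : K) * qbinom q (n + 1 + j) j := by
    rw [Finset.sum_range_succ', Finset.sum_range_succ' _ (k + 1), add_sub_right_comm,
      Finset.mul_sum, ← Finset.sum_sub_distrib]
    congr 1
    · refine Finset.sum_congr rfl fun j hj => ?_
      rw [aux_pascal2 hq, show k + 1 - (j + 1) = k - j by omega,
        show n + (k + 1) = n + 1 + k by ring]
      ring
    · simp [aux_qbinom_zero hq]
  rw [hA, hB]
  ring

theorem aux_R_zero (hq : ∀ n : ℕ, 1 ≤ n → q ^ n ≠ 1) (k : ℕ) :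
    ∑ j ∈ Finset.range (k + 1),
      (-1 : K) ^ j * (Nat.choose (0 + k) (k - j) : K) * qbinom q (0 + j) j = 0 ^ k := by
  have h := add_pow (-1 : K) 1 k
  rw [neg_add_cancel] at h
  rw [h]
  refine Finset.sum_congr rfl fun j hj => ?_
  have hj' : j ≤ k := by simpa [Nat.lt_succ_iff] using hj
  rw [zero_add, zero_add, aux_qbinom_self hq, Nat.choose_symm hj']
  simp

end helpers

/-- **Equation (18)** (Carlitz-type relation, indices normalized):
`S_q(n+k,n) = (1/(1-q)^k) Σ_{j=0}^k (-1)^j C(n+k,k-j) binom(n+j,j)_q`. -/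
theorem qStirling2_carlitz_relation
    {K : Type*} [Field K] [CharZero K] (q : K) (hq0 : q ≠ 0)
    (hq : ∀ n : ℕ, 1 ≤ n → q ^ n ≠ 1) (n k : ℕ) :
    qStirling2 q (n + k) n = (1 / (1 - q) ^ k) * ∑ j ∈ Finset.range (k + 1),
      (-1 : K) ^ j * (Nat.choose (n + k) (k - j) : K) * qbinom q (n + j) j := by
  have h1 := aux_one_sub hq
  induction n generalizing k with
  | zero =>
    rw [aux_R_zero hq, aux_S_col, zero_add]
    cases k <;> simp
  | succ n ihn =>
    induction k with
    | zero => simp [aux_S_diag hq0 hq, aux_qbinom_zero hq]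
    | succ k ihk =>
      rw [← add_assoc, aux_S_rec hq0 hq, ihk, add_assoc (n + 1) k 1, aux_R_rec hq,
        show n + 1 + k = n + (k + 1) by ring, ihn, qnum]
      field_simp
      ring
end
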